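/- The twisted duality functor D(H) := Hom(H, ℤ)(1) (the dual object H^∨ followed by Tate twist by 1) sends every object of 𝓗_{1,{0,−1}} to an object of 𝓗_{1,{−1,−2}}, sends every object of 𝓗_{1,{−1,−2}} to an object of 𝓗_{1,{0,−1}}, and D ∘ D is naturally isomorphic to the identity. Hence D induces an anti-equivalence between the categories 𝓗_{1,{0,−1}} and 𝓗_{1,{−1,−2}}. -/

import Mathlib

open TensorProduct

noncomputable section

/-- Raw data underlying an object of the category 𝓗 of
"mixed Hodge structures with additive part". -/
structure HPre where
  /-- the lattice `H_ℤ` -/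
  HZ : Type
  [instHZ : AddCommGroup HZ]
  /-- the `ℂ`-vector space `H_V` -/
  HV : Type
  [instHV : AddCommGroup HV]
  [instHVmod : Module ℂ HV]
  /-- the weight filtration on `H_ℚ := ℚ ⊗ H_ℤ` -/
  WQ : ℤ → Submodule ℚ (ℚ ⊗[ℤ] HZ)
  /-- the weight filtration on `H_V` -/
  WV : ℤ → Submodule ℂ HV
  /-- the Hodge filtration on `H_V` -/
  F : ℤ → Submodule ℂ HV
  /-- the map `a : H_ℂ := ℂ ⊗ H_ℤ → H_V` -/
  a : ℂ ⊗[ℤ] HZ →ₗ[ℂ] HV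
  /-- the map `b : H_V → H_ℂ` -/
  b : HV →ₗ[ℂ] ℂ ⊗[ℤ] HZ

attribute [instance] HPre.instHZ HPre.instHV HPre.instHVmod

/-- The canonical `ℤ`-linear map `ℚ ⊗_ℤ M → ℂ ⊗_ℤ M`. -/
def ratToComplex (M : Type*) [AddCommGroup M] : (ℚ ⊗[ℤ] M) →ₗ[ℤ] (ℂ ⊗[ℤ] M) :=
  LinearMap.rTensor M ((Algebra.linearMap ℚ ℂ).restrictScalars ℤ)

/-- `W_w H_ℂ := ℂ ⊗_ℚ W_w H_ℚ`, realized as the `ℂ`-span in `H_ℂ = ℂ ⊗_ℤ H_ℤ` of the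
image of `W_w H_ℚ`. -/
def HPre.WC (H : HPre) (w : ℤ) : Submodule ℂ (ℂ ⊗[ℤ] H.HZ) :=
  Submodule.span ℂ (ratToComplex H.HZ '' (H.WQ w : Set (ℚ ⊗[ℤ] H.HZ)))

/-- `H` is an object of the category 𝓗. -/
def IsHObj (H : HPre) : Prop :=
  Module.Finite ℤ H.HZ ∧ FiniteDimensional ℂ H.HV ∧
  Monotone H.WQ ∧ Monotone H.WV ∧ Antitone H.F ∧
  (∀ w : ℤ, (H.WC w).map H.a ≤ H.WV w) ∧
  (∀ w : ℤ, (H.WV w).map H.b ≤ H.WC w) ∧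
  H.b ∘ₗ H.a = LinearMap.id

/-- `(fZ, fV)` is a morphism `H → H'` in the category 𝓗. -/
def IsHHom (H H' : HPre) (fZ : H.HZ →ₗ[ℤ] H'.HZ) (fV : H.HV →ₗ[ℂ] H'.HV) : Prop :=
  (∀ w : ℤ, (H.WQ w).map (fZ.baseChange ℚ) ≤ H'.WQ w) ∧
  (∀ w : ℤ, (H.WV w).map fV ≤ H'.WV w) ∧
  (∀ p : ℤ, (H.F p).map fV ≤ H'.F p) ∧
  fV ∘ₗ H.a = H'.a ∘ₗ (fZ.baseChange ℂ) ∧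
  H'.b ∘ₗ fV = (fZ.baseChange ℂ) ∘ₗ H.b

/-- The canonical `A`-linear map `A ⊗_ℤ Hom_ℤ(M, ℤ) → Hom_A(A ⊗_ℤ M, A)`. -/
def dualBaseChange (A : Type*) [CommRing A] (M : Type*) [AddCommGroup M] :
    A ⊗[ℤ] (Module.Dual ℤ M) →ₗ[A] Module.Dual A (A ⊗[ℤ] M) :=
  LinearMap.liftBaseChange A
    { toFun := fun φ => LinearMap.liftBaseChange A ((Algebra.linearMap ℤ A) ∘ₗ φ)
      map_add' := by
        intro φ ψ
        apply LinearMap.ext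
        intro t
        induction t using TensorProduct.induction_on with
        | zero => simp
        | tmul x m => simp [LinearMap.liftBaseChange_tmul, mul_add]
        | add s t hs ht => simp_all; abel
      map_smul' := by
        intro c φ
        apply LinearMap.ext
        intro t
        induction t using TensorProduct.induction_on with
        | zero => simp
        | tmul x m => simp [LinearMap.liftBaseChange_tmul]; ring
        | add s t hs ht => simp_all }

/-- The characterizing property of the map `b` of the dual object:
under the canonical identification `ℂ ⊗ Hom_ℤ(H_ℤ, ℤ) ≅ Hom_ℂ(H_ℂ, ℂ)`,
it is `ψ ↦ ψ ∘ a`. -/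
def IsDualB (H : HPre)
    (b' : Module.Dual ℂ H.HV →ₗ[ℂ] ℂ ⊗[ℤ] Module.Dual ℤ H.HZ) : Prop :=
  (dualBaseChange ℂ H.HZ) ∘ₗ b' = H.a.dualMap

/-- The dual object `H^∨` (its raw data), given a choice `b'` of the map `b` of the dual
(which is uniquely determined by the property `IsDualB H b'`). -/
def dualPre (H : HPre)
    (b' : Module.Dual ℂ H.HV →ₗ[ℂ] ℂ ⊗[ℤ] Module.Dual ℤ H.HZ) : HPre where
  HZ := Module.Dual ℤ H.HZ
  HV := Module.Dual ℂ H.HV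
  WQ w := (H.WQ (-w - 1)).dualAnnihilator.comap (dualBaseChange ℚ H.HZ)
  WV w := (H.WV (-w - 1)).dualAnnihilator
  F p := (H.F (1 - p)).dualAnnihilator
  a := H.b.dualMap ∘ₗ dualBaseChange ℂ H.HZ
  b := b'


/-- Complex conjugation on `H_ℂ = ℂ ⊗_ℤ H_ℤ` relative to the rational structure:
`conj ⊗ id`, as a `ℤ`-linear map. -/
def conjTensor (M : Type*) [AddCommGroup M] : (ℂ ⊗[ℤ] M) →ₗ[ℤ] (ℂ ⊗[ℤ] M) :=
  LinearMap.rTensor M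
    ((Complex.conjAe.toAlgHom.toLinearMap : ℂ →ₗ[ℝ] ℂ).restrictScalars ℤ)

/-- The transport, by the map induced by `b`, of `F^0 gr^W_{-1}H_V` to `gr^W_{-1}H_ℂ`,
described by its full preimage in `W_{-1}H_ℂ` (a subspace containing `W_{-2}H_ℂ`). -/
def F0GrC (H : HPre) : Submodule ℂ (ℂ ⊗[ℤ] H.HZ) :=
  Submodule.map H.b (H.F 0 ⊓ H.WV (-1)) ⊔ H.WC (-2)

/-- The complex conjugate of `F0GrC H`. -/
def F0GrCBar (H : HPre) : Submodule ℂ (ℂ ⊗[ℤ] H.HZ) :=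
  Submodule.span ℂ (conjTensor H.HZ '' (F0GrC H : Set (ℂ ⊗[ℤ] H.HZ)))

/-- `gr^W_{-1}H` is a polarizable Hodge structure of weight `-1` (all conditions are
expressed on the level of representatives in `W_{-1}`, modulo `W_{-2}`). -/
def IsPolarizableGrNegOne (H : HPre) : Prop :=
  -- the maps induced by `a` and `b` are mutually inverse isomorphisms between
  -- `gr^W_{-1}H_ℂ` and `gr^W_{-1}H_V` (the composite `b∘a` being already the identity)
  (∀ v ∈ H.WV (-1), v - H.a (H.b v) ∈ H.WV (-2)) ∧
  -- `gr^W_{-1}H_ℂ = F^0 ⊕ conj(F^0)`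
  F0GrC H ⊔ F0GrCBar H = H.WC (-1) ∧
  F0GrC H ⊓ F0GrCBar H = H.WC (-2) ∧
  -- polarization: an alternating `ℚ`-bilinear form on `gr^W_{-1}H_ℚ` whose `ℂ`-linear
  -- extension `ψC` satisfies `ψC(F^0, F^0) = 0` and `i·ψC(v, conj v) > 0` for `v ≠ 0`
  ∃ ψ : (ℚ ⊗[ℤ] H.HZ) →ₗ[ℚ] (ℚ ⊗[ℤ] H.HZ) →ₗ[ℚ] ℚ,
    (∀ x, ψ x x = 0) ∧
    (∀ x ∈ H.WQ (-2), ∀ y ∈ H.WQ (-1), ψ x y = 0 ∧ ψ y x = 0) ∧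
    ∃ ψC : (ℂ ⊗[ℤ] H.HZ) →ₗ[ℂ] (ℂ ⊗[ℤ] H.HZ) →ₗ[ℂ] ℂ,
      (∀ x y : ℚ ⊗[ℤ] H.HZ,
        ψC (ratToComplex H.HZ x) (ratToComplex H.HZ y) = (ψ x y : ℂ)) ∧
      (∀ u ∈ F0GrC H, ∀ v ∈ F0GrC H, ψC u v = 0) ∧
      (∀ v ∈ F0GrC H, v ∉ H.WC (-2) →
        ∃ r : ℝ, 0 < r ∧ Complex.I * ψC v (conjTensor H.HZ v) = (r : ℂ))

/-- The full subcategory `𝓗_{1,{0,−1}}` of `𝓗`. -/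
def IsH1ZeroNegOne (H : HPre) : Prop :=
  IsHObj H ∧
  -- (i)
  NoZeroSMulDivisors ℤ H.HZ ∧
  H.F (-1) = ⊤ ∧ H.F 1 = ⊥ ∧
  H.WQ 0 = ⊤ ∧ H.WV 0 = ⊤ ∧ H.WQ (-2) = ⊥ ∧ H.WV (-2) = ⊥ ∧
  -- (ii)
  IsPolarizableGrNegOne H ∧
  -- (iii) `F^0 gr^W_0 H_V = gr^W_0 H_V`, equivalently `F^0H_V + W_{−1}H_V = H_V`
  H.F 0 ⊔ H.WV (-1) = ⊤

/-- The full subcategory `𝓗_{1,{−1,−2}}` of `𝓗`. -/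
def IsH1NegOneNegTwo (H : HPre) : Prop :=
  IsHObj H ∧
  -- (i)
  NoZeroSMulDivisors ℤ H.HZ ∧
  H.F (-1) = ⊤ ∧ H.F 1 = ⊥ ∧
  H.WQ (-1) = ⊤ ∧ H.WV (-1) = ⊤ ∧ H.WQ (-3) = ⊥ ∧ H.WV (-3) = ⊥ ∧
  -- (ii)
  IsPolarizableGrNegOne H ∧
  -- (iii) `F^0 W_{−2}H_V = 0`
  H.F 0 ⊓ H.WV (-2) = ⊥

/-- The Tate twist `H(1)`: same `H_ℤ`, `H_V`, `a`, `b`, with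
`W_w(H(1)) = W_{w+2}H` and `F^p(H(1)) = F^{p+1}H`. -/
def tateTwistOne (H : HPre) : HPre :=
  { H with
    WQ := fun w => H.WQ (w + 2)
    WV := fun w => H.WV (w + 2)
    F := fun p => H.F (p + 1) }

/-- The twisted duality functor `D(H) = Hom(H, ℤ)(1)`. -/
def DFun (H : HPre)
    (b' : Module.Dual ℂ H.HV →ₗ[ℂ] ℂ ⊗[ℤ] Module.Dual ℤ H.HZ) : HPre :=
  tateTwistOne (dualPre H b')

/-!
Both the weight filtrations and the Hodge filtration of `D(H)` consist of annihilators, under the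
perfect pairings `H_ℤ × D(H)_ℤ → ℤ` and `H_V × D(H)_V → ℂ`, of steps of the filtrations of `H`.
Duality by such a pair of pairings is a symmetric relation between two objects, because taking
annihilators twice returns the original subspace. Hence each assertion about `D` has a twin for its
inverse, and `H` and `D(D(H))`, being dual to the same object, are isomorphic. Annihilators
exchange sums with intersections, hence condition (iii) of one subcategory with that of the other.

The one point that is not formal is the polarization. As `ψ` is nondegenerate on `gr^W_{-1}H_ℚ`,
there is a map `t` from `D(H)_ℚ` to `W_{-1}H_ℚ` with `ψ(x, t y) = ⟨x, y⟩` on `W_{-1}`, and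
`(y, z) ↦ ψ(t y, t z)` is the polarization of `D(H)`. Positivity on `F⁰` carries over because `F⁰`
is its own annihilator under `ψ`, so that `t` maps `F⁰` of `D(H)` into `F⁰` of `H`.
-/

section Orthogonal

variable {R M N P : Type*} [CommRing R] [AddCommGroup M] [Module R M] [AddCommGroup N] [Module R N]
  [AddCommGroup P] [Module R P]

theorem orthogonalBilin_bot (B : M →ₗ[R] N →ₗ[R] P) :
    (⊥ : Submodule R M).orthogonalBilin B = ⊤ := by
  ext
  simp

theorem orthogonalBilin_top {B : M →ₗ[R] N →ₗ[R] P} (hB : Function.Injective B.flip) :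
    (⊤ : Submodule R M).orthogonalBilin B = ⊥ := by
  refine (Submodule.eq_bot_iff _).2 fun y hy => hB (LinearMap.ext fun x => ?_)
  simpa using hy x Submodule.mem_top

theorem orthogonalBilin_sup (B : M →ₗ[R] N →ₗ[R] P) (S T : Submodule R M) :
    (S ⊔ T).orthogonalBilin B = S.orthogonalBilin B ⊓ T.orthogonalBilin B := by
  refine le_antisymm (le_inf (Submodule.orthogonalBilin_le le_sup_left)
    (Submodule.orthogonalBilin_le le_sup_right)) fun y ⟨hS, hT⟩ z hz => ?_
  obtain ⟨s, hs, t, ht, rfl⟩ := Submodule.mem_sup.1 hz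
  rw [map_add, LinearMap.add_apply, hS s hs, hT t ht, add_zero]

theorem orthogonalBilin_map {M' N' : Type*} [AddCommGroup M'] [Module R M'] [AddCommGroup N']
    [Module R N'] {B : M →ₗ[R] N →ₗ[R] P} {B' : M' →ₗ[R] N' →ₗ[R] P} {f : M →ₗ[R] M'}
    {g : N' →ₗ[R] N} (hfg : ∀ x y, B' (f x) y = B x (g y)) (S : Submodule R M) :
    (S.map f).orthogonalBilin B' = (S.orthogonalBilin B).comap g := by
  ext y
  simp [hfg]

theorem orthogonalBilin_range_of_isIdempotentElem {B : M →ₗ[R] N →ₗ[R] P}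
    (hB : Function.Injective B.flip) {f : Module.End R M} (hf : IsIdempotentElem f)
    {g : Module.End R N} (hfg : ∀ x y, B (x - f x) y = B x (g y)) :
    (LinearMap.range f).orthogonalBilin B = LinearMap.range g := by
  ext y
  refine ⟨fun hy => ⟨y, hB (LinearMap.ext fun x => ?_)⟩, ?_⟩
  · rw [LinearMap.flip_apply, LinearMap.flip_apply, ← hfg, map_sub, LinearMap.sub_apply,
      hy _ (LinearMap.mem_range_self f x), sub_zero]
  · rintro ⟨z, rfl⟩ _ ⟨x, rfl⟩
    rw [← hfg, ← Module.End.mul_apply, hf.eq, sub_self, map_zero, LinearMap.zero_apply]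

end Orthogonal

section PerfectPairing

variable {k V U : Type*} [Field k] [AddCommGroup V] [Module k V] [AddCommGroup U] [Module k U]

theorem orthogonalBilin_flip_orthogonalBilin (B : V →ₗ[k] U →ₗ[k] k) [B.IsPerfPair]
    (S : Submodule k V) : (S.orthogonalBilin B).orthogonalBilin B.flip = S := by
  ext x
  rw [← Subspace.forall_mem_dualAnnihilator_apply_eq_zero_iff S]
  refine ⟨fun hx φ hφ => ?_, fun hx y hy => hx (B.flip y) ((Submodule.mem_dualAnnihilator _).2 hy)⟩
  obtain ⟨y, rfl⟩ := (LinearMap.IsPerfPair.bijective_right B).surjective φ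
  exact hx y ((Submodule.mem_dualAnnihilator _).1 hφ)

theorem orthogonalBilin_inf (B : V →ₗ[k] U →ₗ[k] k) [B.IsPerfPair] (S T : Submodule k V) :
    (S ⊓ T).orthogonalBilin B = S.orthogonalBilin B ⊔ T.orthogonalBilin B := by
  rw [← orthogonalBilin_flip_orthogonalBilin B.flip (S.orthogonalBilin B ⊔ T.orthogonalBilin B),
    orthogonalBilin_sup, orthogonalBilin_flip_orthogonalBilin,
    orthogonalBilin_flip_orthogonalBilin, LinearMap.flip_flip]

theorem exists_adjoint_of_isPerfPair (B : V →ₗ[k] U →ₗ[k] k) [B.IsPerfPair] (f : Module.End k V) :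
    ∃ g : Module.End k U, ∀ x y, B (f x) y = B x (g y) :=
  ⟨B.flip.toPerfPair.symm ∘ₗ f.dualMap ∘ₗ B.flip, fun x y => by simp⟩

theorem exists_linearMap_into_of_radical_le [FiniteDimensional k V] (ψ : V →ₗ[k] V →ₗ[k] k)
    (B : V →ₗ[k] U →ₗ[k] k) (W : Submodule k V) (L : Submodule k U)
    (h : ∀ x ∈ W, (∀ z ∈ W, ψ x z = 0) → ∀ y ∈ L, B x y = 0) :
    ∃ t : U →ₗ[k] V, (∀ y, t y ∈ W) ∧ ∀ x ∈ W, ∀ y ∈ L, ψ x (t y) = B x y := by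
  let T : W →ₗ[k] W →ₗ[k] k := ψ.domRestrict₁₂ W W
  let φ : L →ₗ[k] Module.Dual k W := (B.domRestrict₁₂ W L).flip
  have hφ (y : L) : φ y ∈ LinearMap.range T.flip := by
    rw [← LinearMap.dualAnnihilator_ker_eq_range_flip, Submodule.mem_dualAnnihilator]
    exact fun x hx => h x x.2
      (fun z hz => LinearMap.congr_fun (LinearMap.mem_ker.1 hx) ⟨z, hz⟩) y y.2
  obtain ⟨s, hs⟩ := Module.projective_lifting_property T.flip.rangeRestrict (φ.codRestrict _ hφ)
    T.flip.surjective_rangeRestrict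
  obtain ⟨t, ht⟩ := s.exists_extend
  refine ⟨W.subtype ∘ₗ t, fun y => (t y).2, fun x hx y hy => ?_⟩
  have hts : t y = s ⟨y, hy⟩ := LinearMap.congr_fun ht ⟨y, hy⟩
  have hTs : T.flip (s ⟨y, hy⟩) = φ ⟨y, hy⟩ :=
    congrArg Subtype.val (LinearMap.congr_fun hs ⟨y, hy⟩)
  rw [LinearMap.comp_apply, hts]
  exact LinearMap.congr_fun hTs ⟨x, hx⟩

end PerfectPairing

section BaseChange

variable {M N M' N' : Type*} [AddCommGroup M] [AddCommGroup N] [AddCommGroup M'] [AddCommGroup N']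

@[simp]
theorem dualBaseChange_tmul_tmul (A : Type*) [CommRing A] (s t : A) (φ : Module.Dual ℤ M) (m : M) :
    dualBaseChange A M (s ⊗ₜ φ) (t ⊗ₜ m) = s * t * (φ m : A) := by
  simp [dualBaseChange, LinearMap.liftBaseChange_tmul, mul_assoc]

theorem dualBaseChange_bijective (A : Type*) [CommRing A] [Module.Finite ℤ M] [Module.Free ℤ M] :
    Function.Bijective (dualBaseChange A M) := by
  have h : dualBaseChange A M =
      ((TensorProduct.isBaseChange ℤ M A).toDualBaseChange : _ →ₗ[A] _) := by
    ext φ m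
    simpa using ((TensorProduct.isBaseChange ℤ M A).toDualBaseChange_tmul 1 φ m).symm
  rw [h]
  exact LinearEquiv.bijective _

/-- The `A`-bilinear extension of a `ℤ`-valued pairing; it carries the pairing between a lattice
and its dual to the coefficients `ℚ` and `ℂ`. -/
def pairBaseChange (A : Type*) [CommRing A] (p : M →ₗ[ℤ] N →ₗ[ℤ] ℤ) :
    A ⊗[ℤ] M →ₗ[A] A ⊗[ℤ] N →ₗ[A] A :=
  dualBaseChange A N ∘ₗ p.baseChange A

@[simp]
theorem pairBaseChange_tmul_tmul (A : Type*) [CommRing A] (p : M →ₗ[ℤ] N →ₗ[ℤ] ℤ)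
    (s t : A) (m : M) (n : N) :
    pairBaseChange A p (s ⊗ₜ m) (t ⊗ₜ n) = s * t * (p m n : A) := by
  simp [pairBaseChange]

theorem pairBaseChange_flip (A : Type*) [CommRing A] (p : M →ₗ[ℤ] N →ₗ[ℤ] ℤ) :
    pairBaseChange A p.flip = (pairBaseChange A p).flip := by
  ext n m
  simp

theorem pairBaseChange_dualEval (A : Type*) [CommRing A] :
    pairBaseChange A (Module.Dual.eval ℤ M) = (dualBaseChange A M).flip := by
  ext m φ
  simp

theorem pairBaseChange_baseChange_of_adjoint (A : Type*) [CommRing A] {p : M →ₗ[ℤ] N →ₗ[ℤ] ℤ}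
    {p' : M' →ₗ[ℤ] N' →ₗ[ℤ] ℤ} {f : M →ₗ[ℤ] M'} {g : N' →ₗ[ℤ] N}
    (hfg : ∀ m n, p' (f m) n = p m (g n)) (x : A ⊗[ℤ] M) (y : A ⊗[ℤ] N') :
    pairBaseChange A p' (f.baseChange A x) y = pairBaseChange A p x (g.baseChange A y) := by
  have h : pairBaseChange A p' ∘ₗ f.baseChange A =
      (pairBaseChange A p).compl₂ (g.baseChange A) := by
    ext m n
    simp [hfg]
  exact LinearMap.congr_fun₂ h x y

instance pairBaseChange_isPerfPair (A : Type*) [CommRing A] [Module.Finite ℤ N] [Module.Free ℤ N]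
    (p : M →ₗ[ℤ] N →ₗ[ℤ] ℤ) [p.IsPerfPair] : (pairBaseChange A p).IsPerfPair := by
  have h : p.baseChange A = (p.toPerfPair.baseChange ℤ A _ _ : _ →ₗ[A] _) := by
    ext
    simp
  refine LinearMap.IsPerfPair.of_bijective _ ((dualBaseChange_bijective A).comp ?_)
  rw [h]
  exact LinearEquiv.bijective _

end BaseChange

section Complexification

variable {M N : Type*} [AddCommGroup M] [AddCommGroup N]

@[simp]
theorem ratToComplex_tmul (r : ℚ) (m : M) : ratToComplex M (r ⊗ₜ m) = (r : ℂ) ⊗ₜ m :=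
  rfl

@[simp]
theorem ratToComplex_smul (r : ℚ) (x : ℚ ⊗[ℤ] M) :
    ratToComplex M (r • x) = (r : ℂ) • ratToComplex M x := by
  induction x using TensorProduct.induction_on with
  | zero => simp
  | tmul s m => simp [smul_tmul']
  | add x y hx hy => simp [hx, hy]

theorem pairBaseChange_ratToComplex (p : M →ₗ[ℤ] N →ₗ[ℤ] ℤ) (x : ℚ ⊗[ℤ] M) (y : ℚ ⊗[ℤ] N) :
    pairBaseChange ℂ p (ratToComplex M x) (ratToComplex N y) = (pairBaseChange ℚ p x y : ℂ) := by
  induction x using TensorProduct.induction_on with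
  | zero => simp
  | add x x' hx hx' => simp [hx, hx']
  | tmul r m =>
    induction y using TensorProduct.induction_on with
    | zero => simp
    | add y y' hy hy' => simp only [map_add, hy, hy', Rat.cast_add]
    | tmul s n => simp

theorem complexTensor_ext {V : Type*} [AddCommGroup V] [Module ℂ V] {f g : ℂ ⊗[ℤ] M →ₗ[ℂ] V}
    (h : ∀ x, f (ratToComplex M x) = g (ratToComplex M x)) : f = g := by
  ext m
  simpa using h (1 ⊗ₜ m)

/-- The `ℂ`-linear extension of a `ℚ`-linear map between rationalized lattices. Since `ℂ ⊗_ℤ M` is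
not literally `ℂ ⊗_ℚ (ℚ ⊗_ℤ M)`, it is not a `LinearMap.baseChange`. -/
def complexify (f : ℚ ⊗[ℤ] M →ₗ[ℚ] ℚ ⊗[ℤ] N) : ℂ ⊗[ℤ] M →ₗ[ℂ] ℂ ⊗[ℤ] N :=
  LinearMap.liftBaseChange ℂ
    (ratToComplex N ∘ₗ f.restrictScalars ℤ ∘ₗ TensorProduct.mk ℤ ℚ M 1)

@[simp]
theorem complexify_tmul (f : ℚ ⊗[ℤ] M →ₗ[ℚ] ℚ ⊗[ℤ] N) (z : ℂ) (m : M) :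
    complexify f (z ⊗ₜ m) = z • ratToComplex N (f (1 ⊗ₜ m)) :=
  LinearMap.liftBaseChange_tmul ..

@[simp]
theorem complexify_ratToComplex (f : ℚ ⊗[ℤ] M →ₗ[ℚ] ℚ ⊗[ℤ] N) (x : ℚ ⊗[ℤ] M) :
    complexify f (ratToComplex M x) = ratToComplex N (f x) := by
  induction x using TensorProduct.induction_on with
  | zero => simp
  | add x y hx hy => simp [hx, hy]
  | tmul r m =>
    have hr : r ⊗ₜ[ℤ] m = r • ((1 : ℚ) ⊗ₜ[ℤ] m) := by simp [smul_tmul']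
    rw [hr, ratToComplex_smul, map_smul f, ratToComplex_smul, map_smul (complexify f)]
    simp

theorem isIdempotentElem_complexify {f : Module.End ℚ (ℚ ⊗[ℤ] M)} (hf : IsIdempotentElem f) :
    IsIdempotentElem (M := Module.End ℂ (ℂ ⊗[ℤ] M)) (complexify f) := by
  refine complexTensor_ext fun x => ?_
  rw [Module.End.mul_apply, complexify_ratToComplex, complexify_ratToComplex,
    ← Module.End.mul_apply, hf.eq]

/-- The complexification `ℂ ⊗_ℚ W` of a rational subspace `W` of `ℚ ⊗_ℤ M`, as a subspace of
`ℂ ⊗_ℤ M`; the weight filtration `HPre.WC` is its value on `HPre.WQ`. -/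
def complexSpan (W : Submodule ℚ (ℚ ⊗[ℤ] M)) : Submodule ℂ (ℂ ⊗[ℤ] M) :=
  Submodule.span ℂ (ratToComplex M '' W)

theorem ratToComplex_mem_complexSpan {W : Submodule ℚ (ℚ ⊗[ℤ] M)} {x : ℚ ⊗[ℤ] M} (hx : x ∈ W) :
    ratToComplex M x ∈ complexSpan W :=
  Submodule.subset_span (Set.mem_image_of_mem _ hx)

theorem complexSpan_mono : Monotone (complexSpan (M := M)) :=
  fun _ _ h => Submodule.span_mono (Set.image_mono h)

theorem complexSpan_range (f : ℚ ⊗[ℤ] M →ₗ[ℚ] ℚ ⊗[ℤ] N) :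
    complexSpan (LinearMap.range f) = LinearMap.range (complexify f) := by
  refine le_antisymm (Submodule.span_le.2 ?_) ?_
  · rintro _ ⟨_, ⟨x, rfl⟩, rfl⟩
    exact ⟨ratToComplex M x, complexify_ratToComplex f x⟩
  · rintro _ ⟨x, rfl⟩
    induction x using TensorProduct.induction_on with
    | zero => simp
    | add x y hx hy => simpa using add_mem hx hy
    | tmul z m =>
      rw [complexify_tmul]
      exact Submodule.smul_mem _ z (ratToComplex_mem_complexSpan (LinearMap.mem_range_self f _))

theorem bilin_eqOn_complexSpan {B B' : ℂ ⊗[ℤ] M →ₗ[ℂ] ℂ ⊗[ℤ] N →ₗ[ℂ] ℂ}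
    {W : Submodule ℚ (ℚ ⊗[ℤ] M)} {L : Submodule ℚ (ℚ ⊗[ℤ] N)}
    (h : ∀ x ∈ W, ∀ y ∈ L, B (ratToComplex M x) (ratToComplex N y) =
      B' (ratToComplex M x) (ratToComplex N y)) :
    ∀ x ∈ complexSpan W, ∀ y ∈ complexSpan L, B x y = B' x y := by
  intro x hx y hy
  have hB : Set.EqOn (B.flip y) (B'.flip y) (ratToComplex M '' W) := by
    rintro _ ⟨x, hx, rfl⟩
    refine LinearMap.eqOn_span' (f := B _) (g := B' _) ?_ hy
    rintro _ ⟨y, hy, rfl⟩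
    exact h x hx y hy
  exact LinearMap.eqOn_span' hB hx

theorem pairBaseChange_complexify_of_adjoint {p : M →ₗ[ℤ] N →ₗ[ℤ] ℤ}
    {f : ℚ ⊗[ℤ] M →ₗ[ℚ] ℚ ⊗[ℤ] M} {g : ℚ ⊗[ℤ] N →ₗ[ℚ] ℚ ⊗[ℤ] N}
    (hfg : ∀ x y, pairBaseChange ℚ p (x - f x) y = pairBaseChange ℚ p x (g y))
    (x : ℂ ⊗[ℤ] M) (y : ℂ ⊗[ℤ] N) :
    pairBaseChange ℂ p (x - complexify f x) y = pairBaseChange ℂ p x (complexify g y) := by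
  have h : pairBaseChange ℂ p ∘ₗ (LinearMap.id - complexify f) =
      (pairBaseChange ℂ p).compl₂ (complexify g) := by
    refine complexTensor_ext fun x => complexTensor_ext fun y => ?_
    simp [← map_sub, pairBaseChange_ratToComplex, hfg]
  exact LinearMap.congr_fun₂ h x y

theorem complexSpan_orthogonalBilin [Module.Finite ℤ N] [Module.Free ℤ N] (p : M →ₗ[ℤ] N →ₗ[ℤ] ℤ)
    [p.IsPerfPair] (W : Submodule ℚ (ℚ ⊗[ℤ] M)) :
    (complexSpan W).orthogonalBilin (pairBaseChange ℂ p) =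
      complexSpan (W.orthogonalBilin (pairBaseChange ℚ p)) := by
  -- `W` is the range of a projection `f`, and its annihilator that of the adjoint of `1 - f`;
  -- unlike annihilators, ranges obviously commute with complexification.
  obtain ⟨W', hW'⟩ := W.exists_isCompl
  have hf := Submodule.isIdempotentElem_projection hW'
  have hW := Submodule.range_projection hW'
  generalize W.projection W' hW' = f at hf hW
  obtain ⟨g, hfg⟩ := exists_adjoint_of_isPerfPair (pairBaseChange ℚ p) (1 - f)
  have injective (A : Type) [CommRing A] := (LinearMap.IsPerfPair.bijective_right
    (pairBaseChange A p)).injective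
  rw [← hW, complexSpan_range, orthogonalBilin_range_of_isIdempotentElem (injective ℚ) hf hfg,
    complexSpan_range]
  exact orthogonalBilin_range_of_isIdempotentElem (injective ℂ) (isIdempotentElem_complexify hf)
    (pairBaseChange_complexify_of_adjoint hfg)

theorem ratToComplex_mem_complexSpan_iff [Module.Finite ℤ M] [Module.Free ℤ M]
    {W : Submodule ℚ (ℚ ⊗[ℤ] M)} {x : ℚ ⊗[ℤ] M} :
    ratToComplex M x ∈ complexSpan W ↔ x ∈ W := by
  refine ⟨fun hx => ?_, ratToComplex_mem_complexSpan⟩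
  let p := Module.Dual.eval ℤ M
  rw [← orthogonalBilin_flip_orthogonalBilin (pairBaseChange ℚ p) W]
  intro y hy
  have hy' := (complexSpan_orthogonalBilin p W).ge (ratToComplex_mem_complexSpan hy) _ hx
  rwa [pairBaseChange_ratToComplex, Rat.cast_eq_zero] at hy'

end Complexification

section Conjugation

variable {M N : Type*} [AddCommGroup M] [AddCommGroup N]

@[simp]
theorem conjTensor_tmul (z : ℂ) (m : M) :
    conjTensor M (z ⊗ₜ m) = (starRingEnd ℂ z) ⊗ₜ m :=
  rfl

@[simp]
theorem conjTensor_smul (z : ℂ) (x : ℂ ⊗[ℤ] M) :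
    conjTensor M (z • x) = starRingEnd ℂ z • conjTensor M x := by
  induction x using TensorProduct.induction_on with
  | zero => simp
  | tmul c m => simp [smul_tmul']
  | add x y hx hy => simp [hx, hy]

@[simp]
theorem conjTensor_conjTensor (x : ℂ ⊗[ℤ] M) : conjTensor M (conjTensor M x) = x := by
  induction x using TensorProduct.induction_on with
  | zero => simp
  | tmul c m => simp
  | add x y hx hy => simp [hx, hy]

@[simp]
theorem conjTensor_ratToComplex (x : ℚ ⊗[ℤ] M) :
    conjTensor M (ratToComplex M x) = ratToComplex M x := by
  induction x using TensorProduct.induction_on with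
  | zero => simp
  | tmul r m => simp
  | add x y hx hy => simp [hx, hy]

theorem complexify_conjTensor (f : ℚ ⊗[ℤ] M →ₗ[ℚ] ℚ ⊗[ℤ] N) (x : ℂ ⊗[ℤ] M) :
    complexify f (conjTensor M x) = conjTensor N (complexify f x) := by
  induction x using TensorProduct.induction_on with
  | zero => simp
  | add x y hx hy => simp [hx, hy]
  | tmul z m => simp

theorem pairBaseChange_conjTensor (p : M →ₗ[ℤ] N →ₗ[ℤ] ℤ) (x : ℂ ⊗[ℤ] M) (y : ℂ ⊗[ℤ] N) :
    pairBaseChange ℂ p (conjTensor M x) (conjTensor N y) =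
      starRingEnd ℂ (pairBaseChange ℂ p x y) := by
  induction x using TensorProduct.induction_on with
  | zero => simp
  | add x x' hx hx' => simp [hx, hx']
  | tmul c m =>
    induction y using TensorProduct.induction_on with
    | zero => simp
    | add y y' hy hy' => simp only [map_add, hy, hy']
    | tmul d n => simp

/-- The complex conjugate of a subspace of `ℂ ⊗_ℤ M`; `F0GrCBar` is its value on `F0GrC`. -/
def conjSpan (S : Submodule ℂ (ℂ ⊗[ℤ] M)) : Submodule ℂ (ℂ ⊗[ℤ] M) :=
  Submodule.span ℂ (conjTensor M '' S)

theorem mem_conjSpan_iff {S : Submodule ℂ (ℂ ⊗[ℤ] M)} {x : ℂ ⊗[ℤ] M} :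
    x ∈ conjSpan S ↔ conjTensor M x ∈ S := by
  refine ⟨fun hx => ?_, fun hx => Submodule.subset_span ⟨_, hx, conjTensor_conjTensor x⟩⟩
  induction hx using Submodule.span_induction with
  | mem _ hx =>
    obtain ⟨x, hx, rfl⟩ := hx
    simpa using hx
  | zero => simp
  | add _ _ _ _ h₁ h₂ => simpa using add_mem h₁ h₂
  | smul c _ _ h => simpa using S.smul_mem _ h

theorem conjTensor_mem_complexSpan {W : Submodule ℚ (ℚ ⊗[ℤ] M)} {x : ℂ ⊗[ℤ] M}
    (hx : x ∈ complexSpan W) : conjTensor M x ∈ complexSpan W := by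
  suffices h : complexSpan W ≤ conjSpan (complexSpan W) from mem_conjSpan_iff.1 (h hx)
  refine Submodule.span_le.2 ?_
  rintro _ ⟨w, hw, rfl⟩
  rw [SetLike.mem_coe, mem_conjSpan_iff, conjTensor_ratToComplex]
  exact ratToComplex_mem_complexSpan hw

theorem conjSpan_orthogonalBilin (p : M →ₗ[ℤ] N →ₗ[ℤ] ℤ) (S : Submodule ℂ (ℂ ⊗[ℤ] M)) :
    (conjSpan S).orthogonalBilin (pairBaseChange ℂ p) =
      conjSpan (S.orthogonalBilin (pairBaseChange ℂ p)) := by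
  ext y
  have h (x : ℂ ⊗[ℤ] M) : pairBaseChange ℂ p (conjTensor M x) y = 0 ↔
      pairBaseChange ℂ p x (conjTensor N y) = 0 := by
    rw [← map_eq_zero (starRingEnd ℂ), ← pairBaseChange_conjTensor, conjTensor_conjTensor]
  simp only [mem_conjSpan_iff, Submodule.mem_orthogonalBilin_iff, ← h]
  exact ⟨fun hy x hx => hy _ (by rwa [conjTensor_conjTensor]),
    fun hy x hx => by simpa using hy _ hx⟩

end Conjugation

namespace HPre

variable {H : HPre}

/-- The underlying lattice is free of finite rank and `H_V` is finite-dimensional; for objects of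
the category 𝓗 this says that the lattice is torsion-free. -/
structure IsFiniteFree (H : HPre) : Prop where
  finite : Module.Finite ℤ H.HZ
  free : Module.Free ℤ H.HZ
  finiteDimensional : FiniteDimensional ℂ H.HV

theorem WC_eq_complexSpan (w : ℤ) : H.WC w = complexSpan (H.WQ w) :=
  rfl

theorem F0GrCBar_eq_conjSpan : F0GrCBar H = conjSpan (F0GrC H) :=
  rfl

end HPre

theorem IsHObj.isFiniteFree {H : HPre} (hH : IsHObj H) (_ : NoZeroSMulDivisors ℤ H.HZ) :
    H.IsFiniteFree :=
  have := hH.1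
  ⟨hH.1, inferInstance, hH.2.1⟩

theorem IsH1ZeroNegOne.isFiniteFree {H : HPre} (hH : IsH1ZeroNegOne H) : H.IsFiniteFree :=
  hH.1.isFiniteFree hH.2.1

theorem IsH1NegOneNegTwo.isFiniteFree {H : HPre} (hH : IsH1NegOneNegTwo H) : H.IsFiniteFree :=
  hH.1.isFiniteFree hH.2.1

namespace IsHObj

variable {H : HPre}

theorem F0GrC_le_WC (hH : IsHObj H) : F0GrC H ≤ H.WC (-1) := by
  obtain ⟨_, _, hWQ, _, _, _, hb, _⟩ := hH
  exact sup_le ((Submodule.map_mono inf_le_right).trans (hb _))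
    (complexSpan_mono (hWQ (by norm_num)))

theorem F0GrC_eq_comap (hH : IsHObj H) (hab : ∀ v ∈ H.WV (-1), v - H.a (H.b v) ∈ H.WV (-2)) :
    F0GrC H = (H.F 0 ⊔ H.WV (-2)).comap H.a ⊓ H.WC (-1) := by
  have hle := hH.F0GrC_le_WC
  obtain ⟨_, _, _, hWV, _, ha, hb, hba⟩ := hH
  refine le_antisymm (le_inf (sup_le ?_ ?_) hle) ?_
  · rintro _ ⟨v, ⟨hvF, hvW⟩, rfl⟩
    have hv : H.a (H.b v) = v - (v - H.a (H.b v)) := (sub_sub_cancel _ _).symm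
    rw [Submodule.mem_comap, hv]
    exact sub_mem (Submodule.mem_sup_left hvF) (Submodule.mem_sup_right (hab v hvW))
  · exact fun z hz => Submodule.mem_sup_right (ha _ (Submodule.mem_map_of_mem hz))
  · rintro x ⟨hx, hxW⟩
    obtain ⟨f, hf, w, hw, hfw⟩ := Submodule.mem_sup.1 hx
    have hfW : f ∈ H.WV (-1) := by
      have hxV := ha _ (Submodule.mem_map_of_mem hxW)
      rw [← hfw] at hxV
      exact (Submodule.add_mem_iff_left _ (hWV (by norm_num) hw)).1 hxV
    have hx' : x = H.b f + H.b w := by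
      rw [← map_add, hfw, ← LinearMap.comp_apply, hba, LinearMap.id_apply]
    rw [hx']
    exact Submodule.add_mem_sup (Submodule.mem_map_of_mem ⟨hf, hfW⟩)
      (hb _ (Submodule.mem_map_of_mem hw))

end IsHObj

/-- The polarization required in `IsPolarizableGrNegOne`: a form `ψ` on the rational lattice
together with its complex extension `ψC`. -/
structure IsPolarization (H : HPre) (ψ : ℚ ⊗[ℤ] H.HZ →ₗ[ℚ] ℚ ⊗[ℤ] H.HZ →ₗ[ℚ] ℚ)
    (ψC : ℂ ⊗[ℤ] H.HZ →ₗ[ℂ] ℂ ⊗[ℤ] H.HZ →ₗ[ℂ] ℂ) : Prop where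
  isAlt : ψ.IsAlt
  radical : ∀ x ∈ H.WQ (-2), ∀ y ∈ H.WQ (-1), ψ x y = 0 ∧ ψ y x = 0
  apply_ratToComplex (x y : ℚ ⊗[ℤ] H.HZ) :
    ψC (ratToComplex H.HZ x) (ratToComplex H.HZ y) = (ψ x y : ℂ)
  isotropic : ∀ u ∈ F0GrC H, ∀ v ∈ F0GrC H, ψC u v = 0
  pos : ∀ v ∈ F0GrC H, v ∉ H.WC (-2) →
    ∃ r : ℝ, 0 < r ∧ Complex.I * ψC v (conjTensor H.HZ v) = (r : ℂ)

theorem isPolarizableGrNegOne_iff {H : HPre} : IsPolarizableGrNegOne H ↔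
    (∀ v ∈ H.WV (-1), v - H.a (H.b v) ∈ H.WV (-2)) ∧
    F0GrC H ⊔ F0GrCBar H = H.WC (-1) ∧ F0GrC H ⊓ F0GrCBar H = H.WC (-2) ∧
    ∃ ψ ψC, IsPolarization H ψ ψC :=
  ⟨fun ⟨hab, hsup, hinf, ψ, hψ, hψ', ψC, hψC, hiso, hpos⟩ =>
      ⟨hab, hsup, hinf, ψ, ψC, hψ, hψ', hψC, hiso, hpos⟩,
    fun ⟨hab, hsup, hinf, ψ, ψC, h⟩ =>
      ⟨hab, hsup, hinf, ψ, h.isAlt, h.radical, ψC, h.apply_ratToComplex, h.isotropic, h.pos⟩⟩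

namespace IsPolarization

variable {H : HPre} {ψ : ℚ ⊗[ℤ] H.HZ →ₗ[ℚ] ℚ ⊗[ℤ] H.HZ →ₗ[ℚ] ℚ}
  {ψC : ℂ ⊗[ℤ] H.HZ →ₗ[ℂ] ℂ ⊗[ℤ] H.HZ →ₗ[ℂ] ℂ}

theorem apply_eq_zero_of_mem_WC (h : IsPolarization H ψ ψC) :
    ∀ x ∈ H.WC (-1), ∀ y ∈ H.WC (-2), ψC x y = 0 :=
  bilin_eqOn_complexSpan (B' := 0) fun x hx y hy => by
    simp [h.apply_ratToComplex, (h.radical y hy x hx).2]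

theorem mem_WC_of_apply_conjTensor_eq_zero (h : IsPolarization H ψ ψC) {v : ℂ ⊗[ℤ] H.HZ}
    (hv : v ∈ F0GrC H) (hvv : ψC v (conjTensor H.HZ v) = 0) : v ∈ H.WC (-2) := by
  by_contra hv'
  obtain ⟨r, hr, hrv⟩ := h.pos v hv hv'
  rw [hvv, mul_zero] at hrv
  exact hr.ne (Complex.ofReal_eq_zero.1 hrv.symm).symm

theorem mem_F0GrC_of_orthogonal (h : IsPolarization H ψ ψC) {v : ℂ ⊗[ℤ] H.HZ}
    (hv : v ∈ F0GrC H ⊔ F0GrCBar H) (hvF : ∀ u ∈ F0GrC H, ψC u v = 0) : v ∈ F0GrC H := by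
  obtain ⟨u, hu, z, hz, rfl⟩ := Submodule.mem_sup.1 hv
  rw [HPre.F0GrCBar_eq_conjSpan, mem_conjSpan_iff] at hz
  have hzz : ψC (conjTensor H.HZ z) (conjTensor H.HZ (conjTensor H.HZ z)) = 0 := by
    simpa [h.isotropic _ hz u hu] using hvF _ hz
  have hz₂ := conjTensor_mem_complexSpan (h.mem_WC_of_apply_conjTensor_eq_zero hz hzz)
  rw [conjTensor_conjTensor] at hz₂
  exact add_mem hu (Submodule.mem_sup_right hz₂)

theorem mem_WQ_of_orthogonal (h : IsPolarization H ψ ψC) (hH : IsHObj H) (hfree : H.IsFiniteFree)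
    (hsup : F0GrC H ⊔ F0GrCBar H = H.WC (-1)) {x : ℚ ⊗[ℤ] H.HZ} (hx : x ∈ H.WQ (-1))
    (hx₀ : ∀ y ∈ H.WQ (-1), ψ x y = 0) : x ∈ H.WQ (-2) := by
  have := hfree.finite
  have := hfree.free
  have hxC := ratToComplex_mem_complexSpan hx
  have hx₀C : ∀ y ∈ H.WC (-1), ∀ z ∈ complexSpan (ℚ ∙ x), ψC y z = 0 :=
    bilin_eqOn_complexSpan (B' := 0) fun y hy z hz => by
      obtain ⟨c, rfl⟩ := Submodule.mem_span_singleton.1 hz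
      simp [h.apply_ratToComplex, h.isAlt.isRefl _ _ (hx₀ y hy)]
  have hxF : ratToComplex H.HZ x ∈ F0GrC H :=
    h.mem_F0GrC_of_orthogonal (hsup.ge hxC) fun u hu => hx₀C u (hH.F0GrC_le_WC hu) _
      (ratToComplex_mem_complexSpan (Submodule.mem_span_singleton_self x))
  refine ratToComplex_mem_complexSpan_iff.1 (h.mem_WC_of_apply_conjTensor_eq_zero hxF ?_)
  rw [conjTensor_ratToComplex, h.apply_ratToComplex, h.isAlt, Rat.cast_zero]

end IsPolarization

/-- `p` and `q` are perfect pairings identifying `K` with `Hom(H, ℤ)(1)`. The sums `-3` of the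
weights and `0` of the Hodge degrees combine the indices of the dual with the Tate twist. -/
structure IsTwistedDual (H K : HPre) (p : H.HZ →ₗ[ℤ] K.HZ →ₗ[ℤ] ℤ)
    (q : H.HV →ₗ[ℂ] K.HV →ₗ[ℂ] ℂ) : Prop where
  isFiniteFree : H.IsFiniteFree
  isPerfPair_HZ : p.IsPerfPair
  isPerfPair_HV : q.IsPerfPair
  WQ_eq {w w' : ℤ} (hw : w + w' = -3) :
    K.WQ w = (H.WQ w').orthogonalBilin (pairBaseChange ℚ p)
  WV_eq {w w' : ℤ} (hw : w + w' = -3) : K.WV w = (H.WV w').orthogonalBilin q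
  F_eq {i j : ℤ} (hij : i + j = 0) : K.F i = (H.F j).orthogonalBilin q
  apply_a (v : H.HV) (y : ℂ ⊗[ℤ] K.HZ) : q v (K.a y) = pairBaseChange ℂ p (H.b v) y
  apply_b (x : ℂ ⊗[ℤ] H.HZ) (φ : K.HV) : pairBaseChange ℂ p x (K.b φ) = q (H.a x) φ

namespace IsTwistedDual

variable {H K : HPre} {p : H.HZ →ₗ[ℤ] K.HZ →ₗ[ℤ] ℤ} {q : H.HV →ₗ[ℂ] K.HV →ₗ[ℂ] ℂ}

theorem isFiniteFree_right (h : IsTwistedDual H K p q) : K.IsFiniteFree :=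
  have ⟨_, _, _⟩ := h.isFiniteFree
  have := h.isPerfPair_HZ
  have := h.isPerfPair_HV
  ⟨.equiv p.flip.toPerfPair.symm, .of_equiv p.flip.toPerfPair.symm,
    .equiv q.flip.toPerfPair.symm⟩

theorem isPerfPair_pairBaseChange (h : IsTwistedDual H K p q) (A : Type*) [CommRing A] :
    (pairBaseChange A p).IsPerfPair :=
  have ⟨_, _, _⟩ := h.isFiniteFree_right
  have := h.isPerfPair_HZ
  inferInstance

theorem symm (h : IsTwistedDual H K p q) : IsTwistedDual K H p.flip q.flip where
  isFiniteFree := h.isFiniteFree_right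
  isPerfPair_HZ := h.isPerfPair_HZ.flip
  isPerfPair_HV := h.isPerfPair_HV.flip
  WQ_eq hw := by
    have := h.isPerfPair_pairBaseChange ℚ
    rw [pairBaseChange_flip, h.WQ_eq (by rwa [add_comm]), orthogonalBilin_flip_orthogonalBilin]
  WV_eq hw := by
    have := h.isPerfPair_HV
    rw [h.WV_eq (by rwa [add_comm]), orthogonalBilin_flip_orthogonalBilin]
  F_eq hij := by
    have := h.isPerfPair_HV
    rw [h.F_eq (by rwa [add_comm]), orthogonalBilin_flip_orthogonalBilin]
  apply_a φ x := by
    rw [pairBaseChange_flip]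
    exact (h.apply_b x φ).symm
  apply_b y v := by
    rw [pairBaseChange_flip]
    exact (h.apply_a v y).symm

theorem WC_eq (h : IsTwistedDual H K p q) {w w' : ℤ} (hw : w + w' = -3) :
    K.WC w = (H.WC w').orthogonalBilin (pairBaseChange ℂ p) := by
  have ⟨_, _, _⟩ := h.isFiniteFree_right
  have := h.isPerfPair_HZ
  rw [HPre.WC_eq_complexSpan, HPre.WC_eq_complexSpan, complexSpan_orthogonalBilin, h.WQ_eq hw]

theorem isHObj (h : IsTwistedDual H K p q) (hH : IsHObj H) : IsHObj K := by
  obtain ⟨_, _, hWQ, hWV, hF, ha, hb, hba⟩ := hH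
  obtain ⟨hfinite, _, hfinite_V⟩ := h.isFiniteFree_right
  refine ⟨hfinite, hfinite_V, fun w w' hw => ?_, fun w w' hw => ?_, fun i j hij => ?_,
    fun w => Submodule.map_le_iff_le_comap.2 ?_, fun w => Submodule.map_le_iff_le_comap.2 ?_, ?_⟩
  · rw [h.WQ_eq (add_sub_cancel w _), h.WQ_eq (add_sub_cancel w' _)]
    exact Submodule.orthogonalBilin_le (hWQ (by omega))
  · rw [h.WV_eq (add_sub_cancel w _), h.WV_eq (add_sub_cancel w' _)]
    exact Submodule.orthogonalBilin_le (hWV (by omega))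
  · rw [h.F_eq (add_neg_cancel i), h.F_eq (add_neg_cancel j)]
    exact Submodule.orthogonalBilin_le (hF (by omega))
  · rw [h.WC_eq (add_sub_cancel w _), h.WV_eq (add_sub_cancel w _),
      ← orthogonalBilin_map fun v y => (h.apply_a v y).symm]
    exact Submodule.orthogonalBilin_le (hb _)
  · rw [h.WC_eq (add_sub_cancel w _), h.WV_eq (add_sub_cancel w _),
      ← orthogonalBilin_map fun x φ => (h.apply_b x φ).symm]
    exact Submodule.orthogonalBilin_le (ha _)
  · refine LinearMap.ext fun y => (h.isPerfPair_pairBaseChange ℂ).bijective_right.injective ?_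
    refine LinearMap.ext fun x => ?_
    rw [LinearMap.flip_apply, LinearMap.flip_apply, LinearMap.comp_apply, h.apply_b, h.apply_a,
      ← LinearMap.comp_apply H.b, hba, LinearMap.id_apply, LinearMap.id_apply]

theorem sub_a_b_mem_WV (h : IsTwistedDual H K p q)
    (hab : ∀ v ∈ H.WV (-1), v - H.a (H.b v) ∈ H.WV (-2)) :
    ∀ φ ∈ K.WV (-1), φ - K.a (K.b φ) ∈ K.WV (-2) := by
  rw [h.WV_eq (w := -1) (w' := -2) (by norm_num), h.WV_eq (w := -2) (w' := -1) (by norm_num)]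
  intro φ hφ v hv
  simpa [h.apply_a, h.apply_b] using hφ _ (hab v hv)

theorem F0GrC_eq (h : IsTwistedDual H K p q) (hH : IsHObj H)
    (hab : ∀ v ∈ H.WV (-1), v - H.a (H.b v) ∈ H.WV (-2)) :
    F0GrC K = (F0GrC H).orthogonalBilin (pairBaseChange ℂ p) := by
  have := h.isPerfPair_HV
  rw [(h.isHObj hH).F0GrC_eq_comap (h.sub_a_b_mem_WV hab), h.F_eq (zero_add 0),
    h.WV_eq (w := -2) (w' := -1) (by norm_num), h.WC_eq (w := -1) (w' := -2) (by norm_num),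
    ← orthogonalBilin_inf, ← orthogonalBilin_map fun v y => (h.apply_a v y).symm,
    ← orthogonalBilin_sup, F0GrC]

theorem F0GrCBar_eq (h : IsTwistedDual H K p q) (hH : IsHObj H)
    (hab : ∀ v ∈ H.WV (-1), v - H.a (H.b v) ∈ H.WV (-2)) :
    F0GrCBar K = (F0GrCBar H).orthogonalBilin (pairBaseChange ℂ p) := by
  rw [HPre.F0GrCBar_eq_conjSpan, HPre.F0GrCBar_eq_conjSpan, conjSpan_orthogonalBilin,
    h.F0GrC_eq hH hab]

variable {ψ : ℚ ⊗[ℤ] H.HZ →ₗ[ℚ] ℚ ⊗[ℤ] H.HZ →ₗ[ℚ] ℚ}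
  {ψC : ℂ ⊗[ℤ] H.HZ →ₗ[ℂ] ℂ ⊗[ℤ] H.HZ →ₗ[ℂ] ℂ}

theorem exists_polarization_lift (h : IsTwistedDual H K p q) (hH : IsHObj H)
    (hsup : F0GrC H ⊔ F0GrCBar H = H.WC (-1)) (hψ : IsPolarization H ψ ψC) :
    ∃ t : ℚ ⊗[ℤ] K.HZ →ₗ[ℚ] ℚ ⊗[ℤ] H.HZ, (∀ y, t y ∈ H.WQ (-1)) ∧
      ∀ x ∈ H.WQ (-1), ∀ y ∈ K.WQ (-1), ψ x (t y) = pairBaseChange ℚ p x y := by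
  have := h.isFiniteFree.finite
  refine exists_linearMap_into_of_radical_le ψ _ _ _ fun x hx hx₀ y hy => ?_
  rw [h.WQ_eq (w := -1) (w' := -2) (by norm_num)] at hy
  exact hy x (hψ.mem_WQ_of_orthogonal hH h.isFiniteFree hsup hx hx₀)

theorem isPolarization_compl₁₂ (h : IsTwistedDual H K p q) (hH : IsHObj H)
    (hab : ∀ v ∈ H.WV (-1), v - H.a (H.b v) ∈ H.WV (-2))
    (hsup : F0GrC H ⊔ F0GrCBar H = H.WC (-1)) (hψ : IsPolarization H ψ ψC)
    {t : ℚ ⊗[ℤ] K.HZ →ₗ[ℚ] ℚ ⊗[ℤ] H.HZ} (htW : ∀ y, t y ∈ H.WQ (-1))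
    (ht : ∀ x ∈ H.WQ (-1), ∀ y ∈ K.WQ (-1), ψ x (t y) = pairBaseChange ℚ p x y) :
    IsPolarization K (ψ.compl₁₂ t t) (ψC.compl₁₂ (complexify t) (complexify t)) := by
  have hK := h.isHObj hH
  have htWC (y) : complexify t y ∈ H.WC (-1) :=
    complexSpan_mono (LinearMap.range_le_iff_comap.2 (Submodule.eq_top_iff'.2 htW))
      ((complexSpan_range t).ge (LinearMap.mem_range_self _ y))
  have htC : ∀ x ∈ H.WC (-1), ∀ y ∈ K.WC (-1),
      ψC x (complexify t y) = pairBaseChange ℂ p x y :=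
    bilin_eqOn_complexSpan (B := ψC.compl₂ (complexify t)) fun x hx y hy => by
      simp [hψ.apply_ratToComplex, ht x hx y hy, pairBaseChange_ratToComplex]
  have htF : ∀ y ∈ F0GrC K, complexify t y ∈ F0GrC H := fun y hy =>
    hψ.mem_F0GrC_of_orthogonal (hsup.ge (htWC y)) fun u hu => by
      rw [htC u (hH.F0GrC_le_WC hu) y (hK.F0GrC_le_WC hy)]
      exact (h.F0GrC_eq hH hab).le hy u hu
  have htrad : ∀ y ∈ K.WQ (-2), ∀ z, ψ (t z) (t y) = 0 := fun y hy z => by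
    rw [ht _ (htW z) y (hK.2.2.1 (by norm_num) hy)]
    exact (h.WQ_eq (by norm_num)).le hy _ (htW z)
  refine ⟨fun y => hψ.isAlt _, fun y hy z _ => ⟨hψ.isAlt.isRefl _ _ (htrad y hy z), htrad y hy z⟩,
    fun y z => ?_, fun y hy z hz => hψ.isotropic _ (htF y hy) _ (htF z hz), fun y hy hyW => ?_⟩
  · simp only [LinearMap.compl₁₂_apply, complexify_ratToComplex, hψ.apply_ratToComplex]
  · rw [LinearMap.compl₁₂_apply, complexify_conjTensor]
    refine hψ.pos _ (htF y hy) fun hty => hyW ((h.WC_eq (w' := -1) (by norm_num)).ge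
      fun x hx => ?_)
    rw [← htC x hx y (hK.F0GrC_le_WC hy)]
    exact hψ.apply_eq_zero_of_mem_WC x hx _ hty

theorem isPolarizableGrNegOne (h : IsTwistedDual H K p q) (hH : IsHObj H)
    (hpol : IsPolarizableGrNegOne H) : IsPolarizableGrNegOne K := by
  obtain ⟨hab, hsup, hinf, ψ, ψC, hψ⟩ := isPolarizableGrNegOne_iff.1 hpol
  obtain ⟨t, htW, ht⟩ := h.exists_polarization_lift hH hsup hψ
  have := h.isPerfPair_pairBaseChange ℂ
  refine isPolarizableGrNegOne_iff.2 ⟨h.sub_a_b_mem_WV hab, ?_, ?_, _, _,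
    h.isPolarization_compl₁₂ hH hab hsup hψ htW ht⟩
  · rw [h.F0GrC_eq hH hab, h.F0GrCBar_eq hH hab, ← orthogonalBilin_inf, hinf,
      h.WC_eq (w' := -2) (by norm_num)]
  · rw [h.F0GrC_eq hH hab, h.F0GrCBar_eq hH hab, ← orthogonalBilin_sup, hsup,
      h.WC_eq (w' := -1) (by norm_num)]

theorem noZeroSMulDivisors (h : IsTwistedDual H K p q) : NoZeroSMulDivisors ℤ K.HZ :=
  have := h.isFiniteFree_right.free
  ⟨fun h₀ => smul_eq_zero.1 h₀⟩

theorem WQ_eq_top (h : IsTwistedDual H K p q) {w w' : ℤ} (hw : w + w' = -3) (hH : H.WQ w' = ⊥) :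
    K.WQ w = ⊤ := by
  rw [h.WQ_eq hw, hH, orthogonalBilin_bot]

theorem WQ_eq_bot (h : IsTwistedDual H K p q) {w w' : ℤ} (hw : w + w' = -3) (hH : H.WQ w' = ⊤) :
    K.WQ w = ⊥ := by
  rw [h.WQ_eq hw, hH, orthogonalBilin_top (h.isPerfPair_pairBaseChange ℚ).bijective_right.injective]

theorem WV_eq_top (h : IsTwistedDual H K p q) {w w' : ℤ} (hw : w + w' = -3) (hH : H.WV w' = ⊥) :
    K.WV w = ⊤ := by
  rw [h.WV_eq hw, hH, orthogonalBilin_bot]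

theorem WV_eq_bot (h : IsTwistedDual H K p q) {w w' : ℤ} (hw : w + w' = -3) (hH : H.WV w' = ⊤) :
    K.WV w = ⊥ := by
  rw [h.WV_eq hw, hH, orthogonalBilin_top h.isPerfPair_HV.bijective_right.injective]

theorem F_eq_top (h : IsTwistedDual H K p q) {i j : ℤ} (hij : i + j = 0) (hH : H.F j = ⊥) :
    K.F i = ⊤ := by
  rw [h.F_eq hij, hH, orthogonalBilin_bot]

theorem F_eq_bot (h : IsTwistedDual H K p q) {i j : ℤ} (hij : i + j = 0) (hH : H.F j = ⊤) :
    K.F i = ⊥ := by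
  rw [h.F_eq hij, hH, orthogonalBilin_top h.isPerfPair_HV.bijective_right.injective]

theorem isH1NegOneNegTwo (h : IsTwistedDual H K p q) (hH : IsH1ZeroNegOne H) :
    IsH1NegOneNegTwo K := by
  obtain ⟨hO, _, hF₁, hF₂, hQ₁, hV₁, hQ₂, hV₂, hpol, hFW⟩ := hH
  refine ⟨h.isHObj hO, h.noZeroSMulDivisors, h.F_eq_top (by norm_num) hF₂,
    h.F_eq_bot (by norm_num) hF₁, h.WQ_eq_top (by norm_num) hQ₂, h.WV_eq_top (by norm_num) hV₂,
    h.WQ_eq_bot (by norm_num) hQ₁, h.WV_eq_bot (by norm_num) hV₁, h.isPolarizableGrNegOne hO hpol,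
    ?_⟩
  rw [h.F_eq (zero_add 0), h.WV_eq (w' := -1) (by norm_num), ← orthogonalBilin_sup, hFW,
    orthogonalBilin_top h.isPerfPair_HV.bijective_right.injective]

theorem isH1ZeroNegOne (h : IsTwistedDual H K p q) (hH : IsH1NegOneNegTwo H) :
    IsH1ZeroNegOne K := by
  obtain ⟨hO, _, hF₁, hF₂, hQ₁, hV₁, hQ₂, hV₂, hpol, hFW⟩ := hH
  have := h.isPerfPair_HV
  refine ⟨h.isHObj hO, h.noZeroSMulDivisors, h.F_eq_top (by norm_num) hF₂,
    h.F_eq_bot (by norm_num) hF₁, h.WQ_eq_top (by norm_num) hQ₂, h.WV_eq_top (by norm_num) hV₂,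
    h.WQ_eq_bot (by norm_num) hQ₁, h.WV_eq_bot (by norm_num) hV₁, h.isPolarizableGrNegOne hO hpol,
    ?_⟩
  rw [h.F_eq (zero_add 0), h.WV_eq (w' := -2) (by norm_num), ← orthogonalBilin_inf, hFW,
    orthogonalBilin_bot]

theorem isH1NegOneNegTwo_iff (h : IsTwistedDual H K p q) :
    IsH1NegOneNegTwo K ↔ IsH1ZeroNegOne H :=
  ⟨h.symm.isH1ZeroNegOne, h.isH1NegOneNegTwo⟩

theorem isH1ZeroNegOne_iff (h : IsTwistedDual H K p q) :
    IsH1ZeroNegOne K ↔ IsH1NegOneNegTwo H :=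
  ⟨h.symm.isH1NegOneNegTwo, h.isH1ZeroNegOne⟩

section Morphisms

variable {H' K' : HPre} {p' : H'.HZ →ₗ[ℤ] K'.HZ →ₗ[ℤ] ℤ} {q' : H'.HV →ₗ[ℂ] K'.HV →ₗ[ℂ] ℂ}
  {fZ : H.HZ →ₗ[ℤ] H'.HZ} {fV : H.HV →ₗ[ℂ] H'.HV}
  {gZ : K'.HZ →ₗ[ℤ] K.HZ} {gV : K'.HV →ₗ[ℂ] K.HV}

theorem isHHom (h : IsTwistedDual H K p q) (h' : IsTwistedDual H' K' p' q')
    (hZ : ∀ x y, p' (fZ x) y = p x (gZ y)) (hV : ∀ v φ, q' (fV v) φ = q v (gV φ))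
    (hf : IsHHom H H' fZ fV) : IsHHom K' K gZ gV := by
  obtain ⟨hWQ, hWV, hF, ha, hb⟩ := hf
  have hA (A : Type) [CommRing A] := pairBaseChange_baseChange_of_adjoint A hZ
  refine ⟨fun w => Submodule.map_le_iff_le_comap.2 ?_,
    fun w => Submodule.map_le_iff_le_comap.2 ?_, fun i => Submodule.map_le_iff_le_comap.2 ?_,
    LinearMap.ext fun y => h.isPerfPair_HV.bijective_right.injective (LinearMap.ext fun v => ?_),
    LinearMap.ext fun φ => (h.isPerfPair_pairBaseChange ℂ).bijective_right.injective
      (LinearMap.ext fun x => ?_)⟩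
  · rw [h.WQ_eq (add_sub_cancel w _), h'.WQ_eq (add_sub_cancel w _), ← orthogonalBilin_map (hA ℚ)]
    exact Submodule.orthogonalBilin_le (hWQ _)
  · rw [h.WV_eq (add_sub_cancel w _), h'.WV_eq (add_sub_cancel w _), ← orthogonalBilin_map hV]
    exact Submodule.orthogonalBilin_le (hWV _)
  · rw [h.F_eq (add_neg_cancel i), h'.F_eq (add_neg_cancel i), ← orthogonalBilin_map hV]
    exact Submodule.orthogonalBilin_le (hF _)
  · simp only [LinearMap.flip_apply, LinearMap.comp_apply, ← hV, h.apply_a, h'.apply_a, ← hA]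
    exact congrArg (pairBaseChange ℂ p' · y) (LinearMap.congr_fun hb v)
  · simp only [LinearMap.flip_apply, LinearMap.comp_apply, ← hV, h.apply_b, h'.apply_b, ← hA]
    exact congrArg (q' · φ) (LinearMap.congr_fun ha x)

theorem isHHom_iff (h : IsTwistedDual H K p q) (h' : IsTwistedDual H' K' p' q')
    (hZ : ∀ x y, p' (fZ x) y = p x (gZ y)) (hV : ∀ v φ, q' (fV v) φ = q v (gV φ)) :
    IsHHom K' K gZ gV ↔ IsHHom H H' fZ fV :=
  ⟨h'.symm.isHHom h.symm (fun y x => (hZ x y).symm) fun φ v => (hV v φ).symm, h.isHHom h' hZ hV⟩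

end Morphisms

end IsTwistedDual

theorem IsHHom.id (H : HPre) : IsHHom H H LinearMap.id LinearMap.id := by
  refine ⟨fun w => ?_, fun w => ?_, fun p => ?_, ?_, ?_⟩ <;> simp

theorem HPre.IsFiniteFree.isTwistedDual_DFun {H : HPre} (hH : H.IsFiniteFree)
    {b' : Module.Dual ℂ H.HV →ₗ[ℂ] ℂ ⊗[ℤ] Module.Dual ℤ H.HZ} (hb' : IsDualB H b') :
    IsTwistedDual H (DFun H b') (Module.Dual.eval ℤ H.HZ) (Module.Dual.eval ℂ H.HV) := by
  have ⟨_, _, _⟩ := hH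
  have hp (A : Type) [CommRing A] : pairBaseChange A (N := (DFun H b').HZ)
      (Module.Dual.eval ℤ H.HZ) = (dualBaseChange A H.HZ).flip :=
    pairBaseChange_dualEval A
  refine ⟨hH, .dualEval, .dualEval, fun {w w'} hw => ?_, fun {w w'} hw => ?_, fun {i j} hij => ?_,
    fun v y => ?_, fun x φ => ?_⟩
  · obtain rfl : w' = -(w + 2) - 1 := by omega
    rw [hp]
    ext y
    exact Submodule.mem_dualAnnihilator _
  · obtain rfl : w' = -(w + 2) - 1 := by omega
    ext φ
    exact Submodule.mem_dualAnnihilator _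
  · obtain rfl : j = 1 - (i + 1) := by omega
    ext φ
    exact Submodule.mem_dualAnnihilator _
  · rw [hp]
    rfl
  · rw [hp]
    exact LinearMap.congr_fun₂ hb' φ x

theorem isHHom_dualMap_iff {H H' : HPre} (hH : H.IsFiniteFree) (hH' : H'.IsFiniteFree)
    {b₁ : Module.Dual ℂ H.HV →ₗ[ℂ] ℂ ⊗[ℤ] Module.Dual ℤ H.HZ}
    {b₂ : Module.Dual ℂ H'.HV →ₗ[ℂ] ℂ ⊗[ℤ] Module.Dual ℤ H'.HZ}
    (hb₁ : IsDualB H b₁) (hb₂ : IsDualB H' b₂) {fZ : H.HZ →ₗ[ℤ] H'.HZ} {fV : H.HV →ₗ[ℂ] H'.HV} :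
    IsHHom (DFun H' b₂) (DFun H b₁) fZ.dualMap fV.dualMap ↔ IsHHom H H' fZ fV :=
  (hH.isTwistedDual_DFun hb₁).isHHom_iff (hH'.isTwistedDual_DFun hb₂) (fun _ _ => rfl)
    fun _ _ => rfl

theorem isHHom_dualEval {H : HPre} (hH : H.IsFiniteFree)
    {b₁ : Module.Dual ℂ H.HV →ₗ[ℂ] ℂ ⊗[ℤ] Module.Dual ℤ H.HZ}
    {b₂ : Module.Dual ℂ (DFun H b₁).HV →ₗ[ℂ] ℂ ⊗[ℤ] Module.Dual ℤ (DFun H b₁).HZ}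
    (hb₁ : IsDualB H b₁) (hb₂ : IsDualB (DFun H b₁) b₂) :
    IsHHom H (DFun (DFun H b₁) b₂) (Module.Dual.eval ℤ H.HZ) (Module.Dual.eval ℂ H.HV) :=
  have h := hH.isTwistedDual_DFun hb₁
  (h.isFiniteFree_right.isTwistedDual_DFun hb₂).isHHom h.symm (fun _ _ => rfl) (fun _ _ => rfl)
    (IsHHom.id _)

theorem exists_isHHom_dualEval_inverse {H : HPre} (hH : H.IsFiniteFree)
    {b₁ : Module.Dual ℂ H.HV →ₗ[ℂ] ℂ ⊗[ℤ] Module.Dual ℤ H.HZ}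
    {b₂ : Module.Dual ℂ (DFun H b₁).HV →ₗ[ℂ] ℂ ⊗[ℤ] Module.Dual ℤ (DFun H b₁).HZ}
    (hb₁ : IsDualB H b₁) (hb₂ : IsDualB (DFun H b₁) b₂) :
    ∃ (gZ : (DFun (DFun H b₁) b₂).HZ →ₗ[ℤ] H.HZ) (gV : (DFun (DFun H b₁) b₂).HV →ₗ[ℂ] H.HV),
      IsHHom (DFun (DFun H b₁) b₂) H gZ gV ∧
      gZ ∘ₗ Module.Dual.eval ℤ H.HZ = LinearMap.id ∧
      Module.Dual.eval ℤ H.HZ ∘ₗ gZ = LinearMap.id ∧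
      gV ∘ₗ Module.Dual.eval ℂ H.HV = LinearMap.id ∧
      Module.Dual.eval ℂ H.HV ∘ₗ gV = LinearMap.id := by
  have ⟨_, _, _⟩ := hH
  have h₁ := hH.isTwistedDual_DFun hb₁
  have h₂ := h₁.isFiniteFree_right.isTwistedDual_DFun hb₂
  let eZ := Module.evalEquiv ℤ H.HZ
  let eV := Module.evalEquiv ℂ H.HV
  exact ⟨eZ.symm.toLinearMap, eV.symm.toLinearMap, h₁.symm.isHHom h₂
      (fun y θ => (LinearMap.congr_fun (eZ.apply_symm_apply θ) y).symm)
      (fun φ θ => (LinearMap.congr_fun (eV.apply_symm_apply θ) φ).symm) (IsHHom.id _),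
    LinearMap.ext eZ.symm_apply_apply, LinearMap.ext eZ.apply_symm_apply,
    LinearMap.ext eV.symm_apply_apply, LinearMap.ext eV.apply_symm_apply⟩

theorem D_anti_equivalence_general :
    (∀ (H : HPre) b', H.IsFiniteFree → IsDualB H b' →
      (IsH1NegOneNegTwo (DFun H b') ↔ IsH1ZeroNegOne H) ∧
      (IsH1ZeroNegOne (DFun H b') ↔ IsH1NegOneNegTwo H)) ∧
    (∀ (H H' : HPre) b₁ b₂, H.IsFiniteFree → H'.IsFiniteFree → IsDualB H b₁ → IsDualB H' b₂ →
      ∀ (fZ : H.HZ →ₗ[ℤ] H'.HZ) (fV : H.HV →ₗ[ℂ] H'.HV),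
        IsHHom (DFun H' b₂) (DFun H b₁) fZ.dualMap fV.dualMap ↔ IsHHom H H' fZ fV) ∧
    (∀ (H : HPre) b₁ b₂, H.IsFiniteFree → IsDualB H b₁ → IsDualB (DFun H b₁) b₂ →
      IsHHom H (DFun (DFun H b₁) b₂)
        (Module.Dual.eval ℤ H.HZ) (Module.Dual.eval ℂ H.HV) ∧
      ∃ (gZ : (DFun (DFun H b₁) b₂).HZ →ₗ[ℤ] H.HZ)
        (gV : (DFun (DFun H b₁) b₂).HV →ₗ[ℂ] H.HV),
        IsHHom (DFun (DFun H b₁) b₂) H gZ gV ∧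
        gZ ∘ₗ Module.Dual.eval ℤ H.HZ = LinearMap.id ∧
        Module.Dual.eval ℤ H.HZ ∘ₗ gZ = LinearMap.id ∧
        gV ∘ₗ Module.Dual.eval ℂ H.HV = LinearMap.id ∧
        Module.Dual.eval ℂ H.HV ∘ₗ gV = LinearMap.id) ∧
    (∀ (H H' : HPre) (fZ : H.HZ →ₗ[ℤ] H'.HZ) (fV : H.HV →ₗ[ℂ] H'.HV),
      fZ.dualMap.dualMap ∘ₗ Module.Dual.eval ℤ H.HZ = Module.Dual.eval ℤ H'.HZ ∘ₗ fZ ∧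
      fV.dualMap.dualMap ∘ₗ Module.Dual.eval ℂ H.HV = Module.Dual.eval ℂ H'.HV ∘ₗ fV) :=
  ⟨fun _ _ hH hb' =>
      have h := hH.isTwistedDual_DFun hb'
      ⟨h.isH1NegOneNegTwo_iff, h.isH1ZeroNegOne_iff⟩,
    fun _ _ _ _ hH hH' hb₁ hb₂ _ _ => isHHom_dualMap_iff hH hH' hb₁ hb₂,
    fun _ _ _ hH hb₁ hb₂ =>
      ⟨isHHom_dualEval hH hb₁ hb₂, exists_isHHom_dualEval_inverse hH hb₁ hb₂⟩,
    fun _ _ _ _ => ⟨rfl, rfl⟩⟩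

/-!
STATEMENT 1: `D = Hom(−, ℤ)(1)` interchanges `𝓗_{1,{0,−1}}` and `𝓗_{1,{−1,−2}}`, and
`D ∘ D` is naturally isomorphic to the identity; hence `D` induces an anti-equivalence
between these two categories.
-/

theorem D_anti_equivalence :
    -- `D` sends every object of `𝓗_{1,{0,−1}}` to an object of `𝓗_{1,{−1,−2}}`
    (∀ (H : HPre) b', IsH1ZeroNegOne H → IsDualB H b' →
      IsH1NegOneNegTwo (DFun H b')) ∧
    -- `D` sends every object of `𝓗_{1,{−1,−2}}` to an object of `𝓗_{1,{0,−1}}`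
    (∀ (H : HPre) b', IsH1NegOneNegTwo H → IsDualB H b' →
      IsH1ZeroNegOne (DFun H b')) ∧
    -- `D` sends morphisms to morphisms, contravariantly
    (∀ (H H' : HPre) b₁ b₂,
      (IsH1ZeroNegOne H ∧ IsH1ZeroNegOne H') ∨ (IsH1NegOneNegTwo H ∧ IsH1NegOneNegTwo H') →
      IsDualB H b₁ → IsDualB H' b₂ →
      ∀ (fZ : H.HZ →ₗ[ℤ] H'.HZ) (fV : H.HV →ₗ[ℂ] H'.HV), IsHHom H H' fZ fV →
        IsHHom (DFun H' b₂) (DFun H b₁) fZ.dualMap fV.dualMap) ∧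
    -- `D ∘ D` is isomorphic to the identity via the canonical evaluation maps ...
    (∀ (H : HPre) b₁ b₂, IsH1ZeroNegOne H ∨ IsH1NegOneNegTwo H →
      IsDualB H b₁ → IsDualB (DFun H b₁) b₂ →
      IsHHom H (DFun (DFun H b₁) b₂)
        (Module.Dual.eval ℤ H.HZ) (Module.Dual.eval ℂ H.HV) ∧
      ∃ (gZ : (DFun (DFun H b₁) b₂).HZ →ₗ[ℤ] H.HZ)
        (gV : (DFun (DFun H b₁) b₂).HV →ₗ[ℂ] H.HV),
        IsHHom (DFun (DFun H b₁) b₂) H gZ gV ∧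
        gZ ∘ₗ Module.Dual.eval ℤ H.HZ = LinearMap.id ∧
        Module.Dual.eval ℤ H.HZ ∘ₗ gZ = LinearMap.id ∧
        gV ∘ₗ Module.Dual.eval ℂ H.HV = LinearMap.id ∧
        Module.Dual.eval ℂ H.HV ∘ₗ gV = LinearMap.id) ∧
    -- ... naturally in `H`
    (∀ (H H' : HPre) (fZ : H.HZ →ₗ[ℤ] H'.HZ) (fV : H.HV →ₗ[ℂ] H'.HV),
      fZ.dualMap.dualMap ∘ₗ Module.Dual.eval ℤ H.HZ = Module.Dual.eval ℤ H'.HZ ∘ₗ fZ ∧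
      fV.dualMap.dualMap ∘ₗ Module.Dual.eval ℂ H.HV = Module.Dual.eval ℂ H'.HV ∘ₗ fV) := by
  obtain ⟨hobj, hhom, hdual, hnat⟩ := D_anti_equivalence_general
  exact ⟨fun H b' hH hb' => (hobj H b' hH.isFiniteFree hb').1.2 hH,
    fun H b' hH hb' => (hobj H b' hH.isFiniteFree hb').2.2 hH,
    fun H H' b₁ b₂ hHH' hb₁ hb₂ fZ fV =>
      (hhom H H' b₁ b₂ (hHH'.elim (·.1.isFiniteFree) (·.1.isFiniteFree))
        (hHH'.elim (·.2.isFiniteFree) (·.2.isFiniteFree)) hb₁ hb₂ fZ fV).2,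
    fun H b₁ b₂ hH => hdual H b₁ b₂ (hH.elim (·.isFiniteFree) (·.isFiniteFree)), hnat⟩
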